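/- Let q be a prime power, let m, k be integers with 1 < k < m, let s ∈ {1,...,m} with gcd(s,m)=1, and let {α_1,...,α_t} and {β_1,...,β_t} be two subsets of F_{q^m}∖{0} whose elements have pairwise distinct norms N_s over F_q. Let (U_1,...,U_t) and (V_1,...,V_t) be the linearized Reed–Solomon systems in (F_{q^m})^k determined by (α_1,...,α_t) and (β_1,...,β_t) respectively (both with the same parameter s). Then (U_1,...,U_t) and (V_1,...,V_t) are equivalent if and only if there exists a nonzero ξ ∈ F_q such that {N_s(β_1),...,N_s(β_t)} = {ξ·N_s(α_1),...,ξ·N_s(α_t)} as subsets of F_q. -/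

import Mathlib

open Pointwise

/-- The `j`-th truncated norm `N_s^j(α) = ∏_{i=0}^{j-1} α^{q^{si}}`. -/
def truncNorm (q s j : ℕ) {L : Type*} [Field L] (α : L) : L :=
  ∏ i ∈ Finset.range j, α ^ q ^ (s * i)

/-- The norm `N_s(α) = ∏_{i=0}^{m-1} α^{q^{si}}` of `α ∈ F_{q^m}` over `F_q`. -/
def normS (q s m : ℕ) {L : Type*} [Field L] (α : L) : L :=
  truncNorm q s m α

/-- The component `U = {(x, N_s^1(α)x^{q^s}, …, N_s^{k-1}(α)x^{q^{s(k-1)}}) : x ∈ F_{q^m}}`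
of a linearized Reed–Solomon system. -/
def lrsComp (q s k : ℕ) {L : Type*} [Field L] (α : L) : Set (Fin k → L) :=
  Set.range fun x : L => fun i : Fin k => truncNorm q s (i : ℕ) α * x ^ q ^ (s * (i : ℕ))

/-- Equivalence of `t`-tuples of subsets of `(F_{q^m})^k`. -/
def sysEquiv {L : Type*} [Field L] {k t : ℕ} (U V : Fin t → Set (Fin k → L)) : Prop :=
  ∃ (A : (Fin k → L) ≃ₗ[L] (Fin k → L)) (γ : Fin t → L) (σ : Equiv.Perm (Fin t)),
    (∀ i, γ i ≠ 0) ∧ ∀ i, U i = γ i • (⇑A '' V (σ i))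

/-! Write `g` for `x ↦ x^{q^s}`, so that `N_s^{j+1}(a) = a · g(N_s^j(a))`, and let
`F_j(y) = ∑ l, f_{jl} g^l(y)` be the coordinates of `c • A(v)`, where `v` runs over the component
of `b`. If these vectors lie in the component of `a`, then `F_{j+1} = a · g ∘ F_j`. Comparing
coefficients, which is legitimate because `1, g, …, g^k` are linearly independent when `k < m`,
shows that `f_{j+1,l+1} = a · g(f_{jl})` and that the last column of `f` vanishes except for the
corner, so `f` is lower triangular. Hence `f₀₀ ≠ 0`, and the relation `f₁₁ = a · g(f₀₀)` reads
`g(c) · w · a = b · c` with `w = g(A₀₀) / A₁₁`, the same `w` for all components. Conversely such a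
relation yields an equivalence with a diagonal `A`. By Hilbert's Theorem 90 it can be solved for
`c ≠ 0` exactly when `N(b) = N(w) · N(a)`. -/

theorem exists_perm_forall_apply_eq_iff_range_eq {ι X : Type*} [Finite ι] {u v : ι → X}
    (hu : Function.Injective u) :
    (∃ σ : Equiv.Perm ι, ∀ i, v (σ i) = u i) ↔ Set.range v = Set.range u := by
  constructor
  · rintro ⟨σ, hσ⟩
    rw [← σ.surjective.range_comp v, show v ∘ σ = u from funext hσ]
  · intro h
    choose f hf using fun i => h ▸ Set.mem_range_self (f := u) i
    have hf_inj : Function.Injective f := fun i j hij => hu (by rw [← hf, ← hf, hij])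
    exact ⟨Equiv.ofBijective f (Finite.injective_iff_bijective.1 hf_inj), hf⟩

section Automorphism

variable {K L : Type*} [CommSemiring K] [Field L] [Algebra K L] {g : L ≃ₐ[K] L}

theorem linearIndependent_pow_of_le_orderOf {n : ℕ} (hn : n ≤ orderOf g) :
    LinearIndependent L fun i : Fin n => (⇑(g ^ (i : ℕ)) : L → L) := by
  refine (linearIndependent_monoidHom L L).comp
    (fun i : Fin n => ((g ^ (i : ℕ) : L ≃ₐ[K] L) : L →* L)) fun i j hij => Fin.ext ?_
  exact pow_injOn_Iio_orderOf (i.2.trans_le hn) (j.2.trans_le hn)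
    (AlgEquiv.ext fun x => DFunLike.congr_fun hij x)

theorem eq_of_forall_sum_mul_pow_apply_eq {n : ℕ} (hn : n ≤ orderOf g) {u v : Fin n → L}
    (h : ∀ y, ∑ i, u i * (g ^ (i : ℕ)) y = ∑ i, v i * (g ^ (i : ℕ)) y) : u = v := by
  refine (linearIndependent_pow_of_le_orderOf hn).fintypeLinearCombination_injective ?_
  ext y
  simpa [Fintype.linearCombination_apply] using h y

/-- The `j`-th truncated norm `∏_{i<j} g^i(x)` with respect to an automorphism `g`; for
`g = (x ↦ x^{q^s})` this is `N_s^j`, and if `j` is the order of `g`, assumed finite, it is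
the norm to the fixed field of `g`. -/
def autTruncNorm (g : L ≃ₐ[K] L) (j : ℕ) (x : L) : L :=
  ∏ i ∈ Finset.range j, (g ^ i) x

@[simp]
theorem autTruncNorm_zero (x : L) : autTruncNorm g 0 x = 1 :=
  Finset.prod_range_zero _

@[simp]
theorem autTruncNorm_one (x : L) : autTruncNorm g 1 x = x := by
  simp [autTruncNorm]

theorem autTruncNorm_succ (j : ℕ) (x : L) :
    autTruncNorm g (j + 1) x = x * g (autTruncNorm g j x) := by
  simp only [autTruncNorm, Finset.prod_range_succ', map_prod, pow_succ', AlgEquiv.mul_apply,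
    pow_zero, AlgEquiv.one_apply, mul_comm]

theorem autTruncNorm_mul (j : ℕ) (x y : L) :
    autTruncNorm g j (x * y) = autTruncNorm g j x * autTruncNorm g j y := by
  simp only [autTruncNorm, map_mul, Finset.prod_mul_distrib]

theorem autTruncNorm_ne_zero {x : L} (j : ℕ) (hx : x ≠ 0) : autTruncNorm g j x ≠ 0 :=
  Finset.prod_ne_zero_iff.2 fun i _ => (map_ne_zero_iff _ (g ^ i).injective).2 hx

theorem autTruncNorm_apply_mul_self (j : ℕ) (x : L) :
    autTruncNorm g j (g x) * x = autTruncNorm g j x * (g ^ j) x := by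
  have h : ∀ i, (g ^ i) (g x) = (g ^ (i + 1)) x := fun i => by
    rw [pow_succ, AlgEquiv.mul_apply]
  simp only [autTruncNorm, h]
  rw [← Finset.prod_range_succ, Finset.prod_range_succ', pow_zero, AlgEquiv.one_apply]

/-- Conjugacy of elements of `L` in the skew polynomial ring `L[X; g]`: `b = g(c) a c⁻¹` for some
`c ≠ 0`. -/
def SkewConj (g : L ≃ₐ[K] L) (a b : L) : Prop :=
  ∃ c : L, c ≠ 0 ∧ g c * a = b * c

/-- Hilbert's Theorem 90. The version `groupCohomology.exists_div_of_norm_eq_one` only covers fields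
in `Type`. -/
theorem exists_mul_apply_eq_self_of_autTruncNorm_eq_one (hg : 0 < orderOf g) {x : L}
    (hx : autTruncNorm g (orderOf g) x = 1) : ∃ c : L, c ≠ 0 ∧ x * g c = c := by
  set n := orderOf g with hn
  let resolvent : L → L := fun z => ∑ i ∈ Finset.range n, autTruncNorm g i x * (g ^ i) z
  have hfixed : ∀ z, x * g (resolvent z) = resolvent z := fun z => by
    have shift : x * g (resolvent z) =
        ∑ i ∈ Finset.range n, autTruncNorm g (i + 1) x * (g ^ (i + 1)) z := by
      simp only [resolvent, map_sum, Finset.mul_sum, map_mul, autTruncNorm_succ, pow_succ',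
        AlgEquiv.mul_apply, mul_assoc]
    have wrap : autTruncNorm g n x * (g ^ n) z = autTruncNorm g 0 x * (g ^ 0) z := by
      rw [hx, hn, pow_orderOf_eq_one, autTruncNorm_zero, pow_zero]
    rw [shift, ← add_left_inj (autTruncNorm g 0 x * (g ^ 0) z),
      ← Finset.sum_range_succ' (fun i => autTruncNorm g i x * (g ^ i) z), ← wrap,
      ← Finset.sum_range_succ]
  obtain ⟨z, hz⟩ : ∃ z, resolvent z ≠ 0 := by
    by_contra! hR
    have hcoeff : (fun i : Fin n => autTruncNorm g i x) = 0 :=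
      eq_of_forall_sum_mul_pow_apply_eq hn.le fun z => by
        simpa [resolvent, Finset.sum_range] using hR z
    simpa using congrFun hcoeff ⟨0, hg⟩
  exact ⟨resolvent z, hz, hfixed z⟩

theorem skewConj_iff_autTruncNorm_eq (hg : 0 < orderOf g) {a b : L} (ha : a ≠ 0) :
    SkewConj g a b ↔ autTruncNorm g (orderOf g) b = autTruncNorm g (orderOf g) a := by
  constructor
  · rintro ⟨c, hc, h⟩
    have hgc : autTruncNorm g (orderOf g) (g c) = autTruncNorm g (orderOf g) c :=
      mul_right_cancel₀ hc <| by
        rw [autTruncNorm_apply_mul_self, pow_orderOf_eq_one, AlgEquiv.one_apply]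
    have hN := congrArg (autTruncNorm g (orderOf g)) h
    rw [autTruncNorm_mul, autTruncNorm_mul, hgc, mul_comm] at hN
    exact (mul_right_cancel₀ (autTruncNorm_ne_zero _ hc) hN).symm
  · intro h
    have hb : b ≠ 0 := by
      rintro rfl
      refine autTruncNorm_ne_zero (g := g) (orderOf g) ha (h ▸ ?_)
      exact Finset.prod_eq_zero (Finset.mem_range.2 hg) (map_zero _)
    have hquot : autTruncNorm g (orderOf g) (a / b) = 1 :=
      mul_right_cancel₀ (autTruncNorm_ne_zero (orderOf g) hb) <| by
        rw [← autTruncNorm_mul, div_mul_cancel₀ a hb, one_mul, h]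
    obtain ⟨c, hc, hfix⟩ := exists_mul_apply_eq_self_of_autTruncNorm_eq_one hg hquot
    refine ⟨c, hc, ?_⟩
    rw [div_mul_eq_mul_div, div_eq_iff hb] at hfix
    rw [mul_comm, hfix, mul_comm]

/-- The vector `(y, N^1(a) g(y), …, N^{k-1}(a) g^{k-1}(y))`, where `N^j = autTruncNorm g j`. -/
def autLrsVec (g : L ≃ₐ[K] L) (k : ℕ) (a y : L) : Fin k → L :=
  fun i => autTruncNorm g i a * (g ^ (i : ℕ)) y

/-- The component determined by `a` of the linearized Reed–Solomon system attached to an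
automorphism `g`; `lrsComp q s k a` is the case `g = (x ↦ x^{q^s})`. -/
def autLrsComp (g : L ≃ₐ[K] L) (k : ℕ) (a : L) : Set (Fin k → L) :=
  Set.range (autLrsVec g k a)

theorem autLrsVec_zero {n : ℕ} (a y : L) : autLrsVec g (n + 1) a y 0 = y := by
  simp [autLrsVec]

theorem autLrsVec_succ {n : ℕ} (a y : L) (j : Fin n) :
    autLrsVec g (n + 1) a y j.succ = a * g (autLrsVec g (n + 1) a y j.castSucc) := by
  simp only [autLrsVec, Fin.val_succ, Fin.val_castSucc, autTruncNorm_succ, map_mul, pow_succ',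
    AlgEquiv.mul_apply, mul_assoc]

/-- The diagonal automorphism with entries `N^j(w)⁻¹`, where `N^j = autTruncNorm g j`; it realizes
the equivalence of systems when all parameters are multiplied by `w`. -/
def autTruncNormDiagonal (g : L ≃ₐ[K] L) (k : ℕ) {w : L} (hw : w ≠ 0) :
    (Fin k → L) ≃ₗ[L] (Fin k → L) :=
  LinearEquiv.piCongrRight fun j : Fin k =>
    LinearEquiv.smulOfNeZero L L (autTruncNorm g j w)⁻¹ (inv_ne_zero (autTruncNorm_ne_zero j hw))

theorem smul_autTruncNormDiagonal_autLrsVec {k : ℕ} {a b c w : L} (hw : w ≠ 0) (hc : c ≠ 0)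
    (h : g c * (w * a) = b * c) (y : L) :
    c • autTruncNormDiagonal g k hw (autLrsVec g k b y) = autLrsVec g k a (c * y) := by
  ext j
  have hN := congrArg (autTruncNorm g j) h
  simp only [autTruncNorm_mul] at hN
  have hb : autTruncNorm g j b * c =
      (g ^ (j : ℕ)) c * autTruncNorm g j w * autTruncNorm g j a := by
    refine mul_left_cancel₀ (autTruncNorm_ne_zero (g := g) j hc) ?_
    linear_combination (autTruncNorm g j w * autTruncNorm g j a) *
      autTruncNorm_apply_mul_self (g := g) j c - c * hN
  have hwj : autTruncNorm g j w ≠ 0 := autTruncNorm_ne_zero j hw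
  simp only [autTruncNormDiagonal, autLrsVec, Pi.smul_apply, LinearEquiv.piCongrRight_apply,
    LinearEquiv.smulOfNeZero_apply, smul_eq_mul, map_mul]
  field_simp
  linear_combination (g ^ (j : ℕ)) y * hb

theorem autLrsComp_eq_smul_image_diagonal {k : ℕ} {a b c w : L} (hw : w ≠ 0) (hc : c ≠ 0)
    (h : g c * (w * a) = b * c) :
    autLrsComp g k a = c • (autTruncNormDiagonal g k hw '' autLrsComp g k b) := by
  have hmul : Function.Surjective (c * · : L → L) := fun y => ⟨c⁻¹ * y, mul_inv_cancel_left₀ hc y⟩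
  simp only [autLrsComp, ← Set.range_comp, ← Set.range_smul, Function.comp_apply,
    smul_autTruncNormDiagonal_autLrsVec hw hc h]
  exact (hmul.range_comp _).symm

theorem coeff_eq_of_forall_sum_eq_mul_apply_sum {n : ℕ} (hn : n + 1 < orderOf g) {a : L}
    {u v : Fin (n + 1) → L}
    (h : ∀ y, ∑ l, v l * (g ^ (l : ℕ)) y = a * g (∑ l, u l * (g ^ (l : ℕ)) y)) :
    a * g (u (Fin.last n)) = 0 ∧ ∀ l : Fin n, v l.succ = a * g (u l.castSucc) := by
  have hcoeff : (Fin.snoc v 0 : Fin (n + 2) → L) = Fin.cons 0 fun l => a * g (u l) := by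
    refine eq_of_forall_sum_mul_pow_apply_eq hn fun y => ?_
    rw [Fin.sum_univ_castSucc, Fin.sum_univ_succ (n := n + 1)]
    simp only [Fin.snoc_castSucc, Fin.snoc_last, Fin.cons_zero, Fin.cons_succ]
    simpa [Finset.mul_sum, pow_succ', mul_assoc, -AlgEquiv.coe_pow] using h y
  constructor
  · have hlast := congrFun hcoeff (Fin.last (n + 1))
    rwa [Fin.snoc_last, ← Fin.succ_last, Fin.cons_succ, eq_comm] at hlast
  · intro l
    have hl := congrFun hcoeff l.succ.castSucc
    rwa [Fin.snoc_castSucc, ← Fin.succ_castSucc, Fin.cons_succ] at hl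

theorem eq_zero_of_lt_of_diagonal_shift {n : ℕ} {a : L} (ha : a ≠ 0)
    {f : Fin (n + 1) → Fin (n + 1) → L}
    (hlast : ∀ j : Fin n, f j.castSucc (Fin.last n) = 0)
    (hshift : ∀ j l : Fin n, f j.succ l.succ = a * g (f j.castSucc l.castSucc)) :
    ∀ {l j : Fin (n + 1)}, j < l → f j l = 0 := by
  intro l
  induction l using Fin.reverseInduction with
  | last =>
    intro j hj
    obtain ⟨j, rfl⟩ := Fin.exists_castSucc_eq.2 hj.ne
    exact hlast j
  | cast l ih =>
    intro j hj
    obtain ⟨j, rfl⟩ := Fin.exists_castSucc_eq.2 (hj.trans (Fin.castSucc_lt_last l)).ne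
    have hsucc : f j.succ l.succ = 0 :=
      ih (Fin.succ_lt_succ_iff.2 (Fin.castSucc_lt_castSucc_iff.1 hj))
    rw [hshift, mul_eq_zero, or_iff_right ha] at hsucc
    exact (map_eq_zero_iff _ g.injective).1 hsucc

theorem toMatrix'_ne_zero_and_mul_apply_eq_of_autLrsComp_eq {n : ℕ} (hn : n + 2 < orderOf g)
    (A : (Fin (n + 2) → L) →ₗ[L] (Fin (n + 2) → L)) {a b c : L} (ha : a ≠ 0)
    (h : autLrsComp g (n + 2) a = c • (A '' autLrsComp g (n + 2) b)) :
    c * A.toMatrix' 0 0 ≠ 0 ∧ a * g (c * A.toMatrix' 0 0) = c * A.toMatrix' 1 1 * b := by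
  let f : Fin (n + 2) → Fin (n + 2) → L := fun j l => c * A.toMatrix' j l * autTruncNorm g l b
  have hf : ∀ y j, (c • A (autLrsVec g (n + 2) b y)) j = ∑ l, f j l * (g ^ (l : ℕ)) y := by
    intro y j
    rw [← LinearMap.toMatrix'_mulVec]
    simp only [f, autLrsVec, Pi.smul_apply, Matrix.mulVec, dotProduct, smul_eq_mul,
      Finset.mul_sum, mul_assoc]
  have hrec : ∀ (j : Fin (n + 1)) y, ∑ l, f j.succ l * (g ^ (l : ℕ)) y =
      a * g (∑ l, f j.castSucc l * (g ^ (l : ℕ)) y) := by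
    intro j y
    obtain ⟨x, hx⟩ : c • A (autLrsVec g (n + 2) b y) ∈ autLrsComp g (n + 2) a :=
      h ▸ Set.smul_mem_smul_set ⟨_, ⟨y, rfl⟩, rfl⟩
    rw [← hf, ← hf, ← hx, autLrsVec_succ]
  have hcoeff := fun j => coeff_eq_of_forall_sum_eq_mul_apply_sum hn (hrec j)
  have htri : ∀ {l j}, j < l → f j l = 0 := eq_zero_of_lt_of_diagonal_shift ha
    (fun j => by simpa [ha] using (hcoeff j).1) fun j => (hcoeff j).2
  refine ⟨fun h00 => ?_, ?_⟩
  · obtain ⟨_, ⟨_, ⟨y, rfl⟩, rfl⟩, hy⟩ : autLrsVec g (n + 2) a 1 ∈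
        c • (A '' autLrsComp g (n + 2) b) := h ▸ ⟨1, rfl⟩
    have hrow : ∀ l, f 0 l = 0 := fun l => by
      rcases eq_or_ne l 0 with rfl | hl
      · simp only [f, h00, zero_mul]
      · exact htri (Fin.pos_iff_ne_zero.2 hl)
    have hy0 := (hf y 0).symm.trans (congrFun hy 0)
    simp [hrow, autLrsVec_zero] at hy0
  · simpa [f] using ((hcoeff 0).2 0).symm

theorem sysEquiv_autLrsComp_iff_skewConj {k t : ℕ} (hk : 1 < k) (hkg : k < orderOf g)
    {α β : Fin t → L} (hα : ∀ i, α i ≠ 0) :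
    sysEquiv (fun i => autLrsComp g k (α i)) (fun i => autLrsComp g k (β i)) ↔
      ∃ w : L, w ≠ 0 ∧ ∃ σ : Equiv.Perm (Fin t), ∀ i, SkewConj g (w * α i) (β (σ i)) := by
  obtain ⟨n, rfl⟩ : ∃ n, k = n + 2 := ⟨k - 2, by omega⟩
  constructor
  · rintro ⟨A, γ, σ, hγ, hA⟩
    rcases isEmpty_or_nonempty (Fin t) with _ | ⟨⟨i₀⟩⟩
    · exact ⟨1, one_ne_zero, 1, isEmptyElim⟩
    set M := LinearMap.toMatrix' (A : (Fin (n + 2) → L) →ₗ[L] (Fin (n + 2) → L)) with hM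
    have hrel := fun i => toMatrix'_ne_zero_and_mul_apply_eq_of_autLrsComp_eq hkg
      (A : (Fin (n + 2) → L) →ₗ[L] (Fin (n + 2) → L)) (hα i) (hA i)
    simp only [← hM] at hrel
    have hM₀ : g (M 0 0) ≠ 0 :=
      (map_ne_zero_iff _ g.injective).2 (right_ne_zero_of_mul (hrel i₀).1)
    have hM₁ : M 1 1 ≠ 0 := by
      intro h
      have h₀ := (hrel i₀).2
      rw [h, mul_zero, zero_mul] at h₀
      exact mul_ne_zero (hα i₀) ((map_ne_zero_iff _ g.injective).2 (hrel i₀).1) h₀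
    refine ⟨g (M 0 0) / M 1 1, div_ne_zero hM₀ hM₁, σ, fun i => ⟨γ i, hγ i, ?_⟩⟩
    have hconj := (hrel i).2
    rw [map_mul] at hconj
    field_simp
    linear_combination hconj
  · rintro ⟨w, hw, σ, hσ⟩
    choose c hc hrel using hσ
    exact ⟨autTruncNormDiagonal g _ hw, c, σ, hc, fun i =>
      autLrsComp_eq_smul_image_diagonal hw (hc i) (hrel i)⟩

theorem stmt6_general {k t : ℕ} (hk : 1 < k) (hkg : k < orderOf g) {α β : Fin t → L}
    (hα : ∀ i, α i ≠ 0) (hα_inj : Function.Injective fun i => autTruncNorm g (orderOf g) (α i)) :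
    sysEquiv (fun i => autLrsComp g k (α i)) (fun i => autLrsComp g k (β i)) ↔
      ∃ w : L, w ≠ 0 ∧ (Set.range fun i => autTruncNorm g (orderOf g) (β i)) =
        autTruncNorm g (orderOf g) w • Set.range fun i => autTruncNorm g (orderOf g) (α i) := by
  rw [sysEquiv_autLrsComp_iff_skewConj hk hkg hα]
  refine exists_congr fun w => and_congr_right fun hw => ?_
  have hwα_inj : Function.Injective fun i =>
      autTruncNorm g (orderOf g) w * autTruncNorm g (orderOf g) (α i) :=
    (mul_right_injective₀ (autTruncNorm_ne_zero _ hw)).comp hα_inj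
  simp only [skewConj_iff_autTruncNorm_eq (pos_of_gt hkg) (mul_ne_zero hw (hα _)),
    autTruncNorm_mul]
  rw [← Set.range_smul]
  exact exists_perm_forall_apply_eq_iff_range_eq
    (v := fun i => autTruncNorm g (orderOf g) (β i)) hwα_inj

end Automorphism

section FiniteField

open FiniteField

theorem autTruncNorm_finrank_eq_algebraMap_norm {K L : Type*} [Field K] [Field L] [Algebra K L]
    [FiniteDimensional K L] [IsGalois K L] {g : L ≃ₐ[K] L}
    (hg : orderOf g = Module.finrank K L) (x : L) :
    autTruncNorm g (Module.finrank K L) x = algebraMap K L (Algebra.norm K x) := by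
  classical
  have hgen : ∀ h, h ∈ Subgroup.zpowers g := by
    rw [← Subgroup.eq_top_iff']
    exact Subgroup.eq_top_of_card_eq _ <| by
      rw [Nat.card_zpowers, hg, IsGalois.card_aut_eq_finrank]
  rw [Algebra.norm_eq_prod_automorphisms, ← IsCyclic.image_range_orderOf hgen,
    Finset.prod_image (by simpa using pow_injOn_Iio_orderOf), hg, autTruncNorm]

theorem exists_ne_zero_autTruncNorm_iff {K L : Type*} [Field K] [Field L] [Finite L]
    [Algebra K L] {g : L ≃ₐ[K] L} (hg : orderOf g = Module.finrank K L) {P : L → Prop} :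
    (∃ w : L, w ≠ 0 ∧ P (autTruncNorm g (Module.finrank K L) w)) ↔
      ∃ ξ : K, ξ ≠ 0 ∧ P (algebraMap K L ξ) := by
  simp only [autTruncNorm_finrank_eq_algebraMap_norm hg, (norm_surjective K L).exists,
    Algebra.norm_ne_zero_iff]

variable {K L : Type*} [Field K] [Fintype K] [Field L] [Finite L] [Algebra K L] {s : ℕ}

theorem frobeniusAlgEquivOfAlgebraic_pow_pow_apply (j : ℕ) (x : L) :
    ((frobeniusAlgEquivOfAlgebraic K L ^ s) ^ j) x = x ^ Fintype.card K ^ (s * j) := by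
  rw [← pow_mul, AlgEquiv.coe_pow, coe_frobeniusAlgEquivOfAlgebraic_iterate]

theorem orderOf_frobeniusAlgEquivOfAlgebraic_pow (hs : s.gcd (Module.finrank K L) = 1) :
    orderOf (frobeniusAlgEquivOfAlgebraic K L ^ s) = Module.finrank K L := by
  have h := orderOf_frobeniusAlgEquivOfAlgebraic K L
  rw [Nat.Coprime.orderOf_pow (by rw [h]; exact Nat.Coprime.symm hs), h]

theorem truncNorm_eq_autTruncNorm (j : ℕ) (x : L) :
    truncNorm (Fintype.card K) s j x =
      autTruncNorm (frobeniusAlgEquivOfAlgebraic K L ^ s) j x := by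
  simp only [truncNorm, autTruncNorm, frobeniusAlgEquivOfAlgebraic_pow_pow_apply]

theorem lrsComp_eq_autLrsComp (k : ℕ) (a : L) :
    lrsComp (Fintype.card K) s k a =
      autLrsComp (frobeniusAlgEquivOfAlgebraic K L ^ s) k a := by
  refine congrArg Set.range (funext₂ fun y i => ?_)
  simp only [autLrsVec, truncNorm_eq_autTruncNorm (K := K),
    frobeniusAlgEquivOfAlgebraic_pow_pow_apply]

end FiniteField

/-- for `1 < k < m`, two linearized Reed–Solomon systems with the same
parameter `s` are equivalent iff their sets of norms coincide up to multiplication by a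
nonzero element `ξ ∈ F_q`. -/
theorem stmt6 (q m k s t : ℕ) (hq : IsPrimePow q) (hk1 : 1 < k) (hkm : k < m)
    (hs1 : 1 ≤ s) (hsm' : s ≤ m) (hsm : Nat.gcd s m = 1)
    (K L : Type*) [Field K] [Fintype K] [Field L] [Fintype L] [Algebra K L]
    (hcardK : Fintype.card K = q) (hrank : Module.finrank K L = m)
    (α β : Fin t → L) (hα : ∀ i, α i ≠ 0) (hβ : ∀ i, β i ≠ 0)
    (hαinj : Function.Injective fun i => normS q s m (α i))
    (hβinj : Function.Injective fun j => normS q s m (β j)) :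
    sysEquiv (fun i => lrsComp q s k (α i)) (fun j => lrsComp q s k (β j)) ↔
      ∃ ξ : K, ξ ≠ 0 ∧
        (Set.range fun j => normS q s m (β j)) =
          algebraMap K L ξ • (Set.range fun i => normS q s m (α i)) := by
  subst hcardK hrank
  have hord := orderOf_frobeniusAlgEquivOfAlgebraic_pow (K := K) (L := L) hsm
  simp only [normS, truncNorm_eq_autTruncNorm (K := K), lrsComp_eq_autLrsComp (K := K)] at hαinj ⊢
  rw [stmt6_general hk1 (hord ▸ hkm) hα (hord ▸ hαinj), hord]
  exact exists_ne_zero_autTruncNorm_iff hord (P := fun N => _ = N • Set.range _)
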